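/- Let B = ℂ[x₁,…,xₙ, y, z]/(x₁^{m₁}⋯xₙ^{mₙ} z − Q(x, y)), where Q(x,y) = y^r + Σ_{i<r} a_i(x) y^i is monic in y of degree r ≥ 2 and all mᵢ ≥ 1. Then the formulas ∂(xᵢ) = 0, ∂(y) = x₁^{m₁}⋯xₙ^{mₙ}, ∂(z) = ∂Q/∂y define a nonzero locally nilpotent ℂ-derivation of B. -/

import Mathlib

open MvPolynomial

set_option synthInstance.maxHeartbeats 1000000
set_option maxHeartbeats 1000000

/-!
The polynomial derivation `D` with `D xᵢ = 0`, `D y = h`, `D z = ∂Q/∂y` kills `h z - Q(x, y)`, since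
both terms contribute `h ∂Q/∂y`; hence it descends to the coordinate ring. It is triangular: it
kills the `xᵢ`, sends `y` into `k[x]` and `z` into `k[x, y]`, and by the Leibniz rule the elements
killed by a power of `D` form a subalgebra, so `D` is locally nilpotent. Finally `D y = h` is
nonzero on the hypersurface, because over the locus `h ≠ 0` the latter has the section `y = 0`,
`z = Q(x, 0) / h`.
-/

section Derivation

variable {R A : Type*} [CommSemiring R] [CommSemiring A] [Algebra R A]

theorem derivation_iterate_mul (D : Derivation R A A) (n : ℕ) (a b : A) :
    D^[n] (a * b) =
      ∑ ij ∈ Finset.HasAntidiagonal.antidiagonal n, n.choose ij.1 • (D^[ij.1] a * D^[ij.2] b) := by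
  induction n with
  | zero => simp
  | succ n ih =>
    rw [Finset.sum_antidiagonal_choose_succ_nsmul (fun i j => D^[i] a * D^[j] b) n]
    simp only [Function.iterate_succ_apply', ih, map_sum, map_nsmul, Derivation.leibniz,
      smul_eq_mul, smul_add, Finset.sum_add_distrib]
    refine congrArg (_ + ·) (Finset.sum_congr rfl fun ij hij => ?_)
    rw [n.choose_symm_of_eq_add (Finset.HasAntidiagonal.mem_antidiagonal.1 hij).symm, mul_comm]

theorem derivation_iterate_eq_zero_of_le (D : Derivation R A A) {a : A} {j k : ℕ} (hjk : j ≤ k)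
    (ha : D^[j] a = 0) : D^[k] a = 0 := by
  rw [← Nat.sub_add_cancel hjk, Function.iterate_add_apply, ha, iterate_map_zero]

theorem derivation_eval₂_of_forall_apply_eq_zero {S : Type*} [Semiring S]
    (D : Derivation R A A) (f : S →+* A) (hf : ∀ s, D (f s) = 0) (a : A) (P : Polynomial S) :
    D (P.eval₂ f a) = (Polynomial.derivative P).eval₂ f a * D a := by
  induction P using Polynomial.induction_on' with
  | add p q hp hq => simp only [Polynomial.eval₂_add, map_add, hp, hq, add_mul]
  | monomial n s =>
    simp only [Polynomial.derivative_monomial, Polynomial.eval₂_monomial, Derivation.leibniz,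
      Derivation.leibniz_pow, hf, smul_eq_mul, nsmul_eq_mul, map_mul, map_natCast]
    ring

theorem derivation_mem_ideal_span (D : Derivation R A A) {s : Set A}
    (hs : ∀ a ∈ s, D a ∈ Ideal.span s) {a : A} (ha : a ∈ Ideal.span s) : D a ∈ Ideal.span s := by
  induction ha using Submodule.span_induction with
  | mem a ha => exact hs a ha
  | zero => rw [map_zero]; exact zero_mem _
  | add a b _ _ ha hb => rw [map_add]; exact add_mem ha hb
  | smul c a ha hDa =>
    rw [smul_eq_mul, Derivation.leibniz]
    exact add_mem (Ideal.mul_mem_left _ c hDa) (Ideal.mul_mem_right _ _ ha)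

/-- A derivation is locally nilpotent if every element is killed by one of its powers, which may
depend on the element. -/
def IsLocallyNilpotent (D : Derivation R A A) : Prop :=
  ∀ a, ∃ k : ℕ, D^[k] a = 0

/-- The subalgebra `Nil(D)` of the elements killed by a power of the derivation `D`; local
nilpotency of `D` only has to be tested on generators because this is a subalgebra. -/
def nilSubalgebra (D : Derivation R A A) : Subalgebra R A where
  carrier := {a | ∃ k : ℕ, D^[k] a = 0}
  algebraMap_mem' r := ⟨1, D.map_algebraMap r⟩
  add_mem' := by
    rintro a b ⟨j, hj⟩ ⟨k, hk⟩
    refine ⟨max j k, ?_⟩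
    rw [iterate_map_add, derivation_iterate_eq_zero_of_le D (le_max_left j k) hj,
      derivation_iterate_eq_zero_of_le D (le_max_right j k) hk, add_zero]
  mul_mem' := by
    rintro a b ⟨j, hj⟩ ⟨k, hk⟩
    refine ⟨j + k, ?_⟩
    rw [derivation_iterate_mul]
    refine Finset.sum_eq_zero fun p hp => ?_
    have hsum : p.1 + p.2 = j + k := Finset.HasAntidiagonal.mem_antidiagonal.1 hp
    obtain hjp | hkp : j ≤ p.1 ∨ k ≤ p.2 := by omega
    · rw [derivation_iterate_eq_zero_of_le D hjp hj, zero_mul, smul_zero]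
    · rw [derivation_iterate_eq_zero_of_le D hkp hk, mul_zero, smul_zero]

theorem mem_nilSubalgebra_of_apply_mem {D : Derivation R A A} {a : A}
    (ha : D a ∈ nilSubalgebra D) : a ∈ nilSubalgebra D :=
  let ⟨k, hk⟩ := ha
  ⟨k + 1, hk⟩

theorem mem_nilSubalgebra_of_apply_eq_zero {D : Derivation R A A} {a : A} (ha : D a = 0) :
    a ∈ nilSubalgebra D :=
  ⟨1, ha⟩

theorem isLocallyNilpotent_of_adjoin_eq_top {D : Derivation R A A} {s : Set A}
    (hs : Algebra.adjoin R s = ⊤) (hD : s ⊆ nilSubalgebra D) : IsLocallyNilpotent D := fun a =>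
  Algebra.adjoin_le hD (hs ▸ Algebra.mem_top : a ∈ Algebra.adjoin R s)

theorem IsLocallyNilpotent.of_surjective {B : Type*} [CommSemiring B] [Algebra R B]
    {D : Derivation R A A} {E : Derivation R B B} (hD : IsLocallyNilpotent D) (f : A →ₐ[R] B)
    (hf : Function.Surjective f) (hfD : Function.Semiconj f D E) : IsLocallyNilpotent E := by
  intro b
  obtain ⟨a, rfl⟩ := hf b
  obtain ⟨k, hk⟩ := hD a
  exact ⟨k, by rw [← (hfD.iterate_right k).eq, hk, map_zero]⟩

end Derivation

section Hypersurface

variable {σ k : Type*} [CommRing k]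

/-- The polynomial `P(x, y)`, for `P` in `k[x][y]`, inside `k[x, y, z]`; here `y` and `z` are the
variables `Sum.inr 0` and `Sum.inr 1`. -/
noncomputable def polynomialXY (P : Polynomial (MvPolynomial σ k)) : MvPolynomial (σ ⊕ Fin 2) k :=
  P.eval₂ (rename Sum.inl).toRingHom (X (Sum.inr 0))

/-- The equation `h(x) z - Q(x, y)` of the hypersurface; in the theorem `h = ∏ xᵢ ^ mᵢ`. -/
noncomputable def hypersurfaceEquation (h : MvPolynomial σ k)
    (Q : Polynomial (MvPolynomial σ k)) : MvPolynomial (σ ⊕ Fin 2) k :=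
  rename Sum.inl h * X (Sum.inr 1) - polynomialXY Q

/-- The triangular derivation `D x = 0`, `D y = h`, `D z = ∂Q/∂y` of `k[x, y, z]`, which induces
the required derivation of the coordinate ring of the hypersurface. -/
noncomputable def triangularDerivation (h : MvPolynomial σ k)
    (Q : Polynomial (MvPolynomial σ k)) :
    Derivation k (MvPolynomial (σ ⊕ Fin 2) k) (MvPolynomial (σ ⊕ Fin 2) k) :=
  mkDerivation k
    (Sum.elim (fun _ => 0) ![rename Sum.inl h, polynomialXY (Polynomial.derivative Q)])

variable (h : MvPolynomial σ k) (Q : Polynomial (MvPolynomial σ k))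

@[simp]
theorem triangularDerivation_X_inl (i : σ) : triangularDerivation h Q (X (Sum.inl i)) = 0 := by
  simp [triangularDerivation]

@[simp]
theorem triangularDerivation_X_inr_zero :
    triangularDerivation h Q (X (Sum.inr 0)) = rename Sum.inl h := by
  simp [triangularDerivation]

@[simp]
theorem triangularDerivation_X_inr_one :
    triangularDerivation h Q (X (Sum.inr 1)) = polynomialXY (Polynomial.derivative Q) := by
  simp [triangularDerivation]

theorem triangularDerivation_rename_inl (p : MvPolynomial σ k) :
    triangularDerivation h Q (rename Sum.inl p) = 0 := by
  classical
  refine derivation_eq_zero_of_forall_mem_vars fun i hi => ?_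
  obtain ⟨j, -, rfl⟩ := Finset.mem_image.1 (vars_rename _ _ hi)
  exact triangularDerivation_X_inl h Q j

theorem triangularDerivation_polynomialXY (P : Polynomial (MvPolynomial σ k)) :
    triangularDerivation h Q (polynomialXY P) =
      polynomialXY (Polynomial.derivative P) * rename Sum.inl h := by
  rw [polynomialXY,
    derivation_eval₂_of_forall_apply_eq_zero _ _ (triangularDerivation_rename_inl h Q),
    triangularDerivation_X_inr_zero, polynomialXY]

theorem triangularDerivation_hypersurfaceEquation :
    triangularDerivation h Q (hypersurfaceEquation h Q) = 0 := by
  rw [hypersurfaceEquation, map_sub, Derivation.leibniz, triangularDerivation_rename_inl,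
    triangularDerivation_X_inr_one, triangularDerivation_polynomialXY, smul_zero, add_zero,
    smul_eq_mul, mul_comm, sub_self]

theorem rename_inl_mem_nilSubalgebra_triangularDerivation (p : MvPolynomial σ k) :
    rename Sum.inl p ∈ nilSubalgebra (triangularDerivation h Q) :=
  mem_nilSubalgebra_of_apply_eq_zero (triangularDerivation_rename_inl h Q p)

theorem X_inr_zero_mem_nilSubalgebra_triangularDerivation :
    X (Sum.inr 0) ∈ nilSubalgebra (triangularDerivation h Q) := by
  apply mem_nilSubalgebra_of_apply_mem
  rw [triangularDerivation_X_inr_zero]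
  exact rename_inl_mem_nilSubalgebra_triangularDerivation h Q h

theorem polynomialXY_mem_nilSubalgebra_triangularDerivation (P : Polynomial (MvPolynomial σ k)) :
    polynomialXY P ∈ nilSubalgebra (triangularDerivation h Q) := by
  rw [polynomialXY, Polynomial.eval₂_eq_sum_range]
  exact sum_mem fun i _ => mul_mem (rename_inl_mem_nilSubalgebra_triangularDerivation h Q _)
    (pow_mem (X_inr_zero_mem_nilSubalgebra_triangularDerivation h Q) i)

theorem isLocallyNilpotent_triangularDerivation :
    IsLocallyNilpotent (triangularDerivation h Q) := by
  refine isLocallyNilpotent_of_adjoin_eq_top adjoin_range_X ?_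
  rintro _ ⟨i | i, rfl⟩
  · exact mem_nilSubalgebra_of_apply_eq_zero (triangularDerivation_X_inl h Q i)
  · fin_cases i
    · exact X_inr_zero_mem_nilSubalgebra_triangularDerivation h Q
    · apply mem_nilSubalgebra_of_apply_mem
      rw [Fin.mk_one, triangularDerivation_X_inr_one]
      exact polynomialXY_mem_nilSubalgebra_triangularDerivation h Q _

/-- The coordinate ring `k[x, y, z] / (h(x) z - Q(x, y))` of the hypersurface. -/
abbrev HypersurfaceRing : Type _ :=
  MvPolynomial (σ ⊕ Fin 2) k ⧸ Ideal.span {hypersurfaceEquation h Q}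

theorem mkₐ_triangularDerivation_eq_zero (a : MvPolynomial (σ ⊕ Fin 2) k)
    (ha : Ideal.Quotient.mkₐ k (Ideal.span {hypersurfaceEquation h Q}) a = 0) :
    Ideal.Quotient.mkₐ k (Ideal.span {hypersurfaceEquation h Q}) (triangularDerivation h Q a) =
      0 := by
  rw [Ideal.Quotient.mkₐ_eq_mk, Ideal.Quotient.eq_zero_iff_mem] at ha ⊢
  refine derivation_mem_ideal_span _ ?_ ha
  rintro _ rfl
  rw [triangularDerivation_hypersurfaceEquation]
  exact zero_mem _

/-- The derivation of the coordinate ring of the hypersurface induced by `triangularDerivation`. -/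
noncomputable def hypersurfaceDerivation :
    Derivation k (HypersurfaceRing h Q) (HypersurfaceRing h Q) :=
  Derivation.liftOfSurjective (Ideal.Quotient.mkₐ_surjective k _)
    (mkₐ_triangularDerivation_eq_zero h Q)

theorem hypersurfaceDerivation_mk (a : MvPolynomial (σ ⊕ Fin 2) k) :
    hypersurfaceDerivation h Q (Ideal.Quotient.mk _ a) =
      Ideal.Quotient.mk _ (triangularDerivation h Q a) :=
  Derivation.liftOfSurjective_apply (Ideal.Quotient.mkₐ_surjective k _)
    (mkₐ_triangularDerivation_eq_zero h Q) a

theorem isLocallyNilpotent_hypersurfaceDerivation :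
    IsLocallyNilpotent (hypersurfaceDerivation h Q) :=
  (isLocallyNilpotent_triangularDerivation h Q).of_surjective (Ideal.Quotient.mkₐ k _)
    (Ideal.Quotient.mkₐ_surjective k _) fun a => (hypersurfaceDerivation_mk h Q a).symm

/-- The section `y = 0`, `z = Q(x, 0) / h` of the hypersurface over the locus `h ≠ 0`, as a
homomorphism from `k[x, y, z]` to `k[x][1/h]`. -/
noncomputable def awaySection : MvPolynomial (σ ⊕ Fin 2) k →ₐ[k] Localization.Away h :=
  aeval (Sum.elim (algebraMap (MvPolynomial σ k) _ ∘ X)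
    ![0, algebraMap (MvPolynomial σ k) _ (Q.coeff 0) * IsLocalization.Away.invSelf h])

theorem awaySection_rename_inl (p : MvPolynomial σ k) :
    awaySection h Q (rename Sum.inl p) = algebraMap _ _ p := by
  rw [awaySection, aeval_rename, Sum.elim_comp_inl, aeval_algebraMap_apply, aeval_X_left_apply]

theorem awaySection_polynomialXY (P : Polynomial (MvPolynomial σ k)) :
    awaySection h Q (polynomialXY P) = algebraMap _ _ (P.coeff 0) := by
  have hy : awaySection h Q (X (Sum.inr 0)) = 0 := by simp [awaySection]
  have hx : (awaySection h Q).toRingHom.comp (rename Sum.inl).toRingHom = algebraMap _ _ :=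
    RingHom.ext (awaySection_rename_inl h Q)
  calc awaySection h Q (polynomialXY P)
      = P.eval₂ ((awaySection h Q).toRingHom.comp (rename Sum.inl).toRingHom)
          (awaySection h Q (X (Sum.inr 0))) := Polynomial.hom_eval₂ ..
    _ = algebraMap _ _ (P.coeff 0) := by rw [hx, hy, Polynomial.eval₂_at_zero]

theorem awaySection_hypersurfaceEquation :
    awaySection h Q (hypersurfaceEquation h Q) = 0 := by
  have hz : awaySection h Q (X (Sum.inr 1)) =
      algebraMap _ _ (Q.coeff 0) * IsLocalization.Away.invSelf h := by
    simp [awaySection]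
  rw [hypersurfaceEquation, map_sub, map_mul, awaySection_rename_inl, awaySection_polynomialXY, hz,
    mul_left_comm, IsLocalization.Away.mul_invSelf, mul_one, sub_self]

variable {h}

theorem rename_inl_notMem_span_hypersurfaceEquation (hh : ¬ IsNilpotent h) :
    rename Sum.inl h ∉ Ideal.span {hypersurfaceEquation h Q} := by
  intro hmem
  have hle : Ideal.span {hypersurfaceEquation h Q} ≤ RingHom.ker (awaySection h Q) := by
    rw [Ideal.span_singleton_le_iff_mem]
    exact awaySection_hypersurfaceEquation h Q
  have hzero : algebraMap _ (Localization.Away h) h = 0 :=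
    (awaySection_rename_inl h Q h).symm.trans (hle hmem)
  have hunit : IsUnit (algebraMap _ (Localization.Away h) h) :=
    IsLocalization.Away.algebraMap_isUnit h
  have hsub : Subsingleton (Localization.Away h) :=
    subsingleton_of_zero_eq_one (isUnit_zero_iff.1 (hzero ▸ hunit))
  exact hh ((IsLocalization.subsingleton_iff (M := Submonoid.powers h)).1 hsub)

theorem hypersurfaceDerivation_ne_zero (hh : ¬ IsNilpotent h) :
    hypersurfaceDerivation h Q ≠ 0 := by
  intro h0
  apply rename_inl_notMem_span_hypersurfaceEquation Q hh
  rw [← Ideal.Quotient.eq_zero_iff_mem, ← triangularDerivation_X_inr_zero h Q,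
    ← hypersurfaceDerivation_mk, h0, Derivation.zero_apply]

theorem stmt11_general (hh : ¬ IsNilpotent h) :
    ∃ D : Derivation k (HypersurfaceRing h Q) (HypersurfaceRing h Q),
      D ≠ 0 ∧ IsLocallyNilpotent D ∧
      (∀ i, D (Ideal.Quotient.mk _ (X (Sum.inl i))) = 0) ∧
      D (Ideal.Quotient.mk _ (X (Sum.inr 0))) = Ideal.Quotient.mk _ (rename Sum.inl h) ∧
      D (Ideal.Quotient.mk _ (X (Sum.inr 1))) =
        Ideal.Quotient.mk _ (polynomialXY (Polynomial.derivative Q)) := by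
  refine ⟨hypersurfaceDerivation h Q, hypersurfaceDerivation_ne_zero Q hh,
    isLocallyNilpotent_hypersurfaceDerivation h Q, fun i => ?_, ?_, ?_⟩
  · rw [hypersurfaceDerivation_mk, triangularDerivation_X_inl, map_zero]
  · rw [hypersurfaceDerivation_mk, triangularDerivation_X_inr_zero]
  · rw [hypersurfaceDerivation_mk, triangularDerivation_X_inr_one]

end Hypersurface

theorem not_isNilpotent_prod_X_pow {σ k : Type*} [Fintype σ] [CommSemiring k] [Nontrivial k]
    (m : σ → ℕ) : ¬ IsNilpotent (∏ i, X i ^ m i : MvPolynomial σ k) := fun hnil =>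
  not_isNilpotent_one (by simpa using hnil.map (eval fun _ => (1 : k)))

/-- On `B = ℂ[x₁,…,xₙ,y,z]/(x^{[m]}z − Q(x,y))` with `Q` monic in
`y` of degree `r ≥ 2` and all `mᵢ ≥ 1`, the formulas `∂xᵢ = 0`, `∂y = x^{[m]}`,
`∂z = ∂Q/∂y` define a nonzero locally nilpotent `ℂ`-derivation. -/
theorem stmt11 (n r : ℕ) (hr : 2 ≤ r) (m : Fin n → ℕ) (hm : ∀ i, 1 ≤ m i)
    (Q : Polynomial (MvPolynomial (Fin n) ℂ)) (hQ : Q.Monic) (hdeg : Q.natDegree = r)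
    (ι : MvPolynomial (Fin n) ℂ →+* MvPolynomial (Fin n ⊕ Fin 2) ℂ)
    (hι : ι = (MvPolynomial.rename (Sum.inl : Fin n → Fin n ⊕ Fin 2)).toRingHom)
    (y z xm : MvPolynomial (Fin n ⊕ Fin 2) ℂ)
    (hy : y = MvPolynomial.X (Sum.inr 0)) (hz : z = MvPolynomial.X (Sum.inr 1))
    (hxm : xm = ∏ i, MvPolynomial.X (Sum.inl i) ^ m i)
    (I : Ideal (MvPolynomial (Fin n ⊕ Fin 2) ℂ))
    (hI : I = Ideal.span {xm * z - Polynomial.eval₂ ι y Q}) :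
    ∃ D : Derivation ℂ
        (MvPolynomial (Fin n ⊕ Fin 2) ℂ ⧸ I) (MvPolynomial (Fin n ⊕ Fin 2) ℂ ⧸ I),
      D ≠ 0 ∧ (∀ b, ∃ k : ℕ, (⇑D)^[k] b = 0) ∧
      (∀ i, D (Ideal.Quotient.mk I (MvPolynomial.X (Sum.inl i))) = 0) ∧
      D (Ideal.Quotient.mk I y) = Ideal.Quotient.mk I xm ∧
      D (Ideal.Quotient.mk I z) =
        Ideal.Quotient.mk I (Polynomial.eval₂ ι y (Polynomial.derivative Q)) := by
  obtain rfl : xm = rename Sum.inl (∏ i, X i ^ m i) := by simp [hxm]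
  subst hι hy hz hI
  exact stmt11_general Q (not_isNilpotent_prod_X_pow m)
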